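/- arXiv:1611.07267 — 2 statements merged into one kernel-verified Lean document; each statement's English description precedes it below -/
import Mathlib

section
/- If X is a Urysohn almost discretely Lindelöf space, then |X| ≤ 2^{χ(X)}. In particular, every first-countable Urysohn almost discretely Lindelöf space has cardinality at most the continuum. -/
open Cardinal Set Topology

universe u

/-- A subset `D` is discrete (as a subspace): every point of `D` has an open
neighbourhood meeting `D` only in that point. -/
def IsDiscreteSubset {X : Type u} [TopologicalSpace X] (D : Set X) : Prop :=
  ∀ x ∈ D, ∃ U : Set X, IsOpen U ∧ U ∩ D = {x}

/-- `X` is almost discretely Lindelöf: every discrete subset is contained in a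
Lindelöf subspace. -/
def AlmostDiscretelyLindelof (X : Type u) [TopologicalSpace X] : Prop :=
  ∀ D : Set X, IsDiscreteSubset D → ∃ L : Set X, IsLindelof L ∧ D ⊆ L

/-- The character of `X` is at most `κ`: every point has an open neighbourhood
base of cardinality at most `κ`. -/
def HasCharacterLE (X : Type u) [TopologicalSpace X] (κ : Cardinal.{u}) : Prop :=
  ∀ x : X, ∃ B : Set (Set X), #B ≤ κ ∧ (∀ U ∈ B, IsOpen U ∧ x ∈ U) ∧
    ∀ V ∈ nhds x, ∃ U ∈ B, U ⊆ V

/-- `R` is right-separated: it carries a well-order in which each point has a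
neighbourhood avoiding all strictly later points (initial segments are open). -/
def RightSeparated {X : Type u} [TopologicalSpace X] (R : Set X) : Prop :=
  ∃ r : R → R → Prop, IsWellOrder R r ∧
    ∀ a : R, ∃ U : Set X, IsOpen U ∧ (a : X) ∈ U ∧ ∀ b : R, (b : X) ∈ U → ¬ r a b

/-- `R` is left-separated: it carries a well-order in which each point has a
neighbourhood avoiding all strictly earlier points (initial segments are closed). -/
def LeftSeparated {X : Type u} [TopologicalSpace X] (R : Set X) : Prop :=
  ∃ r : R → R → Prop, IsWellOrder R r ∧
    ∀ a : R, ∃ U : Set X, IsOpen U ∧ (a : X) ∈ U ∧ ∀ b : R, (b : X) ∈ U → ¬ r b a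

/-- The θ-closure operator: `x ∈ thetaCl A` iff the closure of every open
neighbourhood of `x` meets `A`. -/
def thetaCl {X : Type u} [TopologicalSpace X] (A : Set X) : Set X :=
  {x | ∀ U : Set X, IsOpen U → x ∈ U → (closure U ∩ A).Nonempty}

/-- `A` is θ-closed if it coincides with its θ-closure operator value. -/
def IsThetaClosed {X : Type u} [TopologicalSpace X] (A : Set X) : Prop :=
  thetaCl A = A

/-- `[A]_θ`, the smallest θ-closed set containing `A`. -/
def thetaClosure {X : Type u} [TopologicalSpace X] (A : Set X) : Set X :=
  ⋂₀ {B : Set X | A ⊆ B ∧ IsThetaClosed B}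

/-- A (well-ordered) sequence is free if at every cut the closures of the two
pieces are disjoint. -/
def IsFreeSeq {X : Type u} [TopologicalSpace X] {ι : Type u} [LinearOrder ι]
    (f : ι → X) : Prop :=
  ∀ i : ι, closure (f '' {j | j < i}) ∩ closure (f '' {j | i ≤ j}) = ∅

/-- A (well-ordered) sequence is θ-free if at every cut the θ-closure of the
initial piece is disjoint from the closure of the final piece. -/
def IsThetaFreeSeq {X : Type u} [TopologicalSpace X] {ι : Type u} [LinearOrder ι]
    (f : ι → X) : Prop :=
  ∀ i : ι, thetaClosure (f '' {j | j < i}) ∩ closure (f '' {j | i ≤ j}) = ∅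

/-- A cellular family: pairwise disjoint nonempty open sets. -/
def IsCellularFamily {X : Type u} [TopologicalSpace X] (𝒰 : Set (Set X)) : Prop :=
  (∀ U ∈ 𝒰, IsOpen U ∧ U.Nonempty) ∧ 𝒰.PairwiseDisjoint id

/-- `X` is cellular-Lindelöf: every cellular family admits a Lindelöf subspace
meeting each of its members. -/
def CellularLindelof (X : Type u) [TopologicalSpace X] : Prop :=
  ∀ 𝒰 : Set (Set X), IsCellularFamily 𝒰 →
    ∃ L : Set X, IsLindelof L ∧ ∀ U ∈ 𝒰, (U ∩ L).Nonempty

/-- `lam` is a caliber of `X`: any `lam`-many nonempty open sets include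
`lam`-many with a common point. -/
def IsCaliber (X : Type u) [TopologicalSpace X] (lam : Cardinal.{u}) : Prop :=
  ∀ (ι : Type u) (U : ι → Set X), #ι = lam →
    (∀ i, IsOpen (U i) ∧ (U i).Nonempty) →
    ∃ S : Set ι, #S = lam ∧ (⋂ i ∈ S, U i).Nonempty

/-!
Write `κ` for the character of `X`. By a closing-off argument every Lindelöf subspace has at most
`2 ^ κ` points, hence so has every discrete set.

For `|A| ≤ κ`, the set `[A]_θ` has at most `2 ^ κ` points, and each point outside it has an open
neighbourhood whose closure misses it. Šapirovskiĭ's lemma selects a discrete set of such points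
whose neighbourhoods, together with its closure, cover the complement of `[A]_θ`. So at most `2 ^ κ`
closed sets disjoint from the closure of `A` cover all of `X` but `2 ^ κ` points.

If `|X| > 2 ^ κ`, close off a set `Y` with `|Y| ≤ 2 ^ κ` under these families and pick `p ∉ Y`. For
small `A ⊆ Y` some member of the family of `A` contains `p`, and any `κ` of these members meet
inside `Y`. Recursion yields a free sequence of length `κ⁺` in `Y`. But a free sequence is discrete,
hence lies in a Lindelöf subspace, and then character `κ` forces its cofinality to be at most `κ`.
-/

section Cardinality

variable {X : Type u} {κ μ : Cardinal.{u}}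

theorem exists_range_eq_of_mk_le {ι : Type u} {S : Set X} (hS : S.Nonempty) (h : #S ≤ #ι) :
    ∃ f : ι → X, range f = S := by
  have := hS.to_subtype
  obtain ⟨i⟩ := h
  exact ⟨Subtype.val ∘ Function.invFun i,
    (Function.invFun_surjective i.injective).range_comp _ |>.trans Subtype.range_coe⟩

theorem mk_bounded_powerset_le (hμ : ℵ₀ ≤ μ) (hμκ : μ ^ κ ≤ μ) {S : Set X} (hS : #S ≤ μ) :
    #{T : Set X | T ⊆ S ∧ #T ≤ κ} ≤ μ :=
  calc #{T : Set X | T ⊆ S ∧ #T ≤ κ}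
      ≤ max #S ℵ₀ ^ κ := mk_bounded_subset_le S κ
    _ ≤ μ ^ κ := power_le_power_right (max_le hS hμ)
    _ ≤ μ := hμκ

theorem le_of_power_le_self (hμ : ℵ₀ ≤ μ) (hμκ : μ ^ κ ≤ μ) : κ ≤ μ :=
  (cantor' κ (one_lt_aleph0.trans_le hμ)).le.trans hμκ

theorem two_power_power_self (hκ : ℵ₀ ≤ κ) : ((2 : Cardinal.{u}) ^ κ) ^ κ = 2 ^ κ := by
  rw [← power_mul, mul_eq_self hκ]

theorem mk_biUnion_le_of_le {ι : Type u} {I : Set ι} {S : ι → Set X} (hμ : ℵ₀ ≤ μ)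
    (hI : #I ≤ μ) (hS : ∀ i ∈ I, #(S i) ≤ μ) : #(⋃ i ∈ I, S i) ≤ μ :=
  calc #(⋃ i ∈ I, S i)
      ≤ #I * ⨆ i : I, #(S i) := mk_biUnion_le S I
    _ ≤ μ * μ := mul_le_mul' hI (ciSup_le' fun i => hS i i.2)
    _ = μ := mul_eq_self hμ

theorem mk_union_le_of_le {S T : Set X} (hμ : ℵ₀ ≤ μ) (hS : #S ≤ μ) (hT : #T ≤ μ) :
    #(S ∪ T : Set X) ≤ μ :=
  (mk_union_le S T).trans (add_le_of_le hμ hS hT)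

theorem mk_wType_sum_le {S J P : Type u} (hμ : ℵ₀ ≤ μ) (hμP : μ ^ #P ≤ μ) (hS : #S ≤ μ)
    (hJ : #J ≤ μ) : #(WType (Sum.elim (fun _ : S => PEmpty.{u + 1}) fun _ : J => P)) ≤ μ := by
  apply WType.cardinalMk_le_of_le
  calc Cardinal.sum (fun s => μ ^ #(Sum.elim (fun _ : S => PEmpty.{u + 1}) (fun _ : J => P) s))
      ≤ Cardinal.sum (fun _ : S ⊕ J => μ) := by
        refine Cardinal.sum_le_sum _ _ ?_
        rintro (s | _)
        · simpa using one_le_aleph0.trans hμ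
        · exact hμP
    _ = (#S + #J) * μ := by simp
    _ ≤ μ * μ := by gcongr; exact add_le_of_le hμ hS hJ
    _ = μ := mul_eq_self hμ

theorem exists_superset_closed_under (hμ : ℵ₀ ≤ μ) (hμκ : μ ^ κ ≤ μ) {Φ : Set X → Set X}
    (hΦ : ∀ E : Set X, #E ≤ κ → #(Φ E) ≤ μ) {A : Set X} (hA : #A ≤ μ) :
    ∃ Y, A ⊆ Y ∧ #Y ≤ μ ∧ ∀ E ⊆ Y, #E ≤ κ → Φ E ⊆ Y := by
  rcases isEmpty_or_nonempty X with _ | ⟨⟨x₀⟩⟩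
  · exact ⟨A, Subset.rfl, hA, fun _ _ _ x => isEmptyElim x⟩
  have henum : ∀ E : Set X, ∃ e : μ.out → X, #E ≤ κ → range e = insert x₀ (Φ E) := by
    intro E
    by_cases hE : #E ≤ κ
    · have hins : #(insert x₀ (Φ E) : Set X) ≤ μ :=
        mk_insert_le.trans (add_le_of_le hμ (hΦ E hE) (one_le_aleph0.trans hμ))
      obtain ⟨e, he⟩ := exists_range_eq_of_mk_le (ι := μ.out) (insert_nonempty x₀ (Φ E))
        (by rwa [mk_out])
      exact ⟨e, fun _ => he⟩
    · exact ⟨fun _ => x₀, fun h => absurd h hE⟩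
  choose e he using henum
  -- Trees whose inner nodes apply one of the `μ` many `κ`-ary operations enumerating `Φ` and whose
  -- leaves are the initial points; these operations miss `E = ∅`, so `Φ ∅` is made initial too.
  let Tree := WType (Sum.elim (fun _ : ↥(A ∪ Φ ∅) => PEmpty.{u + 1}) fun _ : μ.out => κ.out)
  let eval : Tree → X := WType.elim X fun
    | ⟨.inl a, _⟩ => a
    | ⟨.inr j, f⟩ => e (range f) j
  have hleaf : A ∪ Φ ∅ ⊆ range eval := fun a ha => ⟨.mk (.inl ⟨a, ha⟩) PEmpty.elim, rfl⟩
  have hTree : #Tree ≤ μ := mk_wType_sum_le hμ (by rwa [mk_out])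
    (mk_union_le_of_le hμ hA (hΦ ∅ (by simp))) (mk_out μ).le
  refine ⟨range eval, subset_union_left.trans hleaf, mk_range_le.trans hTree, fun E hEY hE => ?_⟩
  rcases E.eq_empty_or_nonempty with rfl | hne
  · exact subset_union_right.trans hleaf
  obtain ⟨f, rfl⟩ := exists_range_eq_of_mk_le (ι := κ.out) hne (by rwa [mk_out])
  choose g hg using fun k => hEY (mem_range_self (f := f) k)
  obtain rfl : (fun k => eval (g k)) = f := funext hg
  intro x hx
  obtain ⟨j, rfl⟩ : x ∈ range (e _) := he _ hE ▸ mem_insert_of_mem x₀ hx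
  exact ⟨.mk (.inr j) g, rfl⟩

theorem exists_closed_under_and_meeting (hμ : ℵ₀ ≤ μ) (hμκ : μ ^ κ ≤ μ) {Φ : Set X → Set X}
    (hΦ : ∀ E : Set X, #E ≤ κ → #(Φ E) ≤ μ) {𝒮 : Set X → Set (Set X)}
    (h𝒮 : ∀ E : Set X, #E ≤ κ → #(𝒮 E) ≤ μ) :
    ∃ Y : Set X, #Y ≤ μ ∧ (∀ E ⊆ Y, #E ≤ κ → Φ E ⊆ Y) ∧
      ∀ E ⊆ Y, #E ≤ κ → ∀ S ∈ 𝒮 E, S.Nonempty → (S ∩ Y).Nonempty := by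
  let points (E : Set X) : Set X := range fun S : {S | S ∈ 𝒮 E ∧ S.Nonempty} => S.2.2.some
  have hpoints : ∀ E : Set X, #E ≤ κ → #(points E) ≤ μ := fun E hE =>
    mk_range_le.trans ((mk_le_mk_of_subset fun S hS => hS.1).trans (h𝒮 E hE))
  obtain ⟨Y, -, hY, hclosed⟩ := exists_superset_closed_under hμ hμκ (Φ := fun E => Φ E ∪ points E)
    (fun E hE => mk_union_le_of_le hμ (hΦ E hE) (hpoints E hE)) (A := ∅) (by simp)
  refine ⟨Y, hY, fun E hEY hE => subset_union_left.trans (hclosed E hEY hE), ?_⟩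
  intro E hEY hE S hS hne
  exact ⟨hne.some, hne.some_mem, hclosed E hEY hE (.inr ⟨⟨S, hS, hne⟩, rfl⟩)⟩

end Cardinality

section ThetaClosure

variable {X : Type u} [TopologicalSpace X] {A B Y : Set X} {x y : X} {κ μ : Cardinal.{u}}

theorem thetaCl_mono (h : A ⊆ B) : thetaCl A ⊆ thetaCl B :=
  fun _ hx U hU hxU => (hx U hU hxU).mono (inter_subset_inter_right _ h)

theorem closure_subset_thetaCl : closure A ⊆ thetaCl A := fun _ hx U hU hxU =>
  (mem_closure_iff.1 hx U hU hxU).mono (inter_subset_inter_left _ subset_closure)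

theorem IsThetaClosed.isClosed (h : IsThetaClosed A) : IsClosed A :=
  isClosed_of_closure_subset (closure_subset_thetaCl.trans h.subset)

theorem isThetaClosed_iff_thetaCl_subset : IsThetaClosed A ↔ thetaCl A ⊆ A :=
  ⟨fun h => h.subset, fun h => h.antisymm (subset_closure.trans closure_subset_thetaCl)⟩

theorem IsThetaClosed.exists_disjoint_closure (h : IsThetaClosed A) (hx : x ∉ A) :
    ∃ U, IsOpen U ∧ x ∈ U ∧ Disjoint (closure U) A := by
  have hx' : x ∉ thetaCl A := fun hxA => hx (h.subset hxA)
  simpa only [thetaCl, mem_ofPred_eq, not_forall, not_nonempty_iff_eq_empty,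
    ← disjoint_iff_inter_eq_empty, exists_prop] using hx'

theorem subset_thetaClosure : A ⊆ thetaClosure A := subset_sInter fun _ hB => hB.1

theorem thetaClosure_subset (hAB : A ⊆ B) (hB : IsThetaClosed B) : thetaClosure A ⊆ B :=
  sInter_subset_of_mem ⟨hAB, hB⟩

theorem isThetaClosed_thetaClosure : IsThetaClosed (thetaClosure A) :=
  isThetaClosed_iff_thetaCl_subset.2 <| subset_sInter fun _ hB =>
    (thetaCl_mono (thetaClosure_subset hB.1 hB.2)).trans hB.2.subset

theorem closure_subset_thetaClosure : closure A ⊆ thetaClosure A :=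
  closure_minimal subset_thetaClosure isThetaClosed_thetaClosure.isClosed

/-- A family of sets which, in a Urysohn space, determines the point `x`: every member has `x` in
its θ-closure, and the closure of every neighbourhood of `x` contains a member. It is used to count
the points of a θ-closure. -/
structure IsThetaTrace (x : X) (𝓕 : Set (Set X)) : Prop where
  mem_thetaCl : ∀ F ∈ 𝓕, x ∈ thetaCl F
  exists_subset_closure : ∀ U, IsOpen U → x ∈ U → ∃ F ∈ 𝓕, F ⊆ closure U

theorem IsThetaTrace.eq [T25Space X] {𝓕 : Set (Set X)} (hx : IsThetaTrace x 𝓕)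
    (hy : IsThetaTrace y 𝓕) : x = y := by
  by_contra hne
  obtain ⟨U, hxU, hU, V, hyV, hV, hUV⟩ := exists_open_nhds_disjoint_closure hne
  obtain ⟨F, hF, hFU⟩ := hx.exists_subset_closure U hU hxU
  obtain ⟨z, hzV, hzF⟩ := hy.mem_thetaCl F hF V hV hyV
  exact hUV.notMem_of_mem_left (hFU hzF) hzV

theorem HasCharacterLE.exists_isThetaTrace (hχ : HasCharacterLE X κ) (hx : x ∈ thetaCl A) :
    ∃ 𝓕 ⊆ {F | F ⊆ A ∧ #F ≤ κ}, #𝓕 ≤ κ ∧ IsThetaTrace x 𝓕 := by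
  obtain ⟨ℬ, hℬ, hopen, hbase⟩ := hχ x
  choose a ha using fun U : ℬ => hx U (hopen U U.2).1 (hopen U U.2).2
  refine ⟨range fun U : ℬ => closure U ∩ range a, ?_, mk_range_le.trans hℬ, ?_, ?_⟩
  · rintro _ ⟨U, rfl⟩
    exact ⟨inter_subset_right.trans (range_subset_iff.2 fun V => (ha V).2),
      (mk_le_mk_of_subset inter_subset_right).trans (mk_range_le.trans hℬ)⟩
  · rintro _ ⟨U, rfl⟩ V hV hxV
    obtain ⟨W, hW, hWUV⟩ := hbase (U ∩ V)
      (((hopen U U.2).1.inter hV).mem_nhds ⟨(hopen U U.2).2, hxV⟩)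
    have haW : a ⟨W, hW⟩ ∈ closure (U ∩ V) := closure_mono hWUV (ha ⟨W, hW⟩).1
    exact ⟨a ⟨W, hW⟩, closure_mono inter_subset_right haW,
      closure_mono inter_subset_left haW, mem_range_self _⟩
  · intro U hU hxU
    obtain ⟨W, hW, hWU⟩ := hbase U (hU.mem_nhds hxU)
    exact ⟨_, ⟨⟨W, hW⟩, rfl⟩, inter_subset_left.trans (closure_mono hWU)⟩

theorem HasCharacterLE.mk_thetaCl_le [T25Space X] (hχ : HasCharacterLE X κ) (hμ : ℵ₀ ≤ μ)
    (hμκ : μ ^ κ ≤ μ) (hA : #A ≤ μ) : #(thetaCl A) ≤ μ := by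
  choose 𝓕 h𝓕A h𝓕 htrace using fun x : thetaCl A => hχ.exists_isThetaTrace x.2
  have hinj : Function.Injective fun x : thetaCl A =>
      (⟨𝓕 x, h𝓕A x, h𝓕 x⟩ : {𝓖 | 𝓖 ⊆ {F | F ⊆ A ∧ #F ≤ κ} ∧ #𝓖 ≤ κ}) := by
    intro x y hxy
    have h𝓕xy : 𝓕 x = 𝓕 y := congrArg Subtype.val hxy
    exact Subtype.ext ((htrace x).eq (h𝓕xy ▸ htrace y))
  exact (mk_le_of_injective hinj).trans
    (mk_bounded_powerset_le hμ hμκ (mk_bounded_powerset_le hμ hμκ hA))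

theorem HasCharacterLE.isThetaClosed_of_forall (hχ : HasCharacterLE X κ)
    (hY : ∀ E ⊆ Y, #E ≤ κ → thetaCl E ⊆ Y) : IsThetaClosed Y := by
  refine isThetaClosed_iff_thetaCl_subset.2 fun x hx => ?_
  obtain ⟨𝓕, h𝓕Y, -, htrace⟩ := hχ.exists_isThetaTrace hx
  obtain ⟨F, hF, -⟩ := htrace.exists_subset_closure Set.univ isOpen_univ (mem_univ x)
  exact hY F (h𝓕Y hF).1 (h𝓕Y hF).2 (htrace.mem_thetaCl F hF)

theorem HasCharacterLE.mk_thetaClosure_le [T25Space X] (hχ : HasCharacterLE X κ) (hμ : ℵ₀ ≤ μ)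
    (hμκ : μ ^ κ ≤ μ) (hA : #A ≤ μ) : #(thetaClosure A) ≤ μ := by
  obtain ⟨Y, hAY, hY, hclosed⟩ := exists_superset_closed_under hμ hμκ (Φ := thetaCl)
    (fun E hE => hχ.mk_thetaCl_le hμ hμκ (hE.trans (le_of_power_le_self hμ hμκ))) hA
  exact (mk_le_mk_of_subset (thetaClosure_subset hAY (hχ.isThetaClosed_of_forall hclosed))).trans hY

end ThetaClosure

section Lindelof

variable {X : Type u} [TopologicalSpace X] {κ : Cardinal.{u}}

theorem HasCharacterLE.mk_le_two_power [T25Space X] [LindelofSpace X] (hχ : HasCharacterLE X κ)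
    (hκ : ℵ₀ ≤ κ) : #X ≤ 2 ^ κ := by
  have hμ : ℵ₀ ≤ (2 : Cardinal.{u}) ^ κ := hκ.trans (cantor κ).le
  have hμκ := (two_power_power_self hκ).le
  choose ℬ hℬ hopen hbase using id hχ
  let 𝒮 (E : Set X) : Set (Set X) := (fun 𝒱 => (⋃₀ 𝒱)ᶜ) '' 𝒫 (⋃ x ∈ E, ℬ x)
  have h𝒮 : ∀ E : Set X, #E ≤ κ → #(𝒮 E) ≤ 2 ^ κ := fun E hE =>
    calc #(𝒮 E) ≤ #(𝒫 (⋃ x ∈ E, ℬ x)) := mk_image_le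
      _ = 2 ^ #(⋃ x ∈ E, ℬ x) := mk_powerset _
      _ ≤ 2 ^ κ := power_le_power_left two_ne_zero (mk_biUnion_le_of_le hκ hE fun x _ => hℬ x)
  obtain ⟨Y, hY, hθ, hmeet⟩ := exists_closed_under_and_meeting hμ hμκ
    (fun E hE => hχ.mk_thetaCl_le hμ hμκ (hE.trans (cantor κ).le)) h𝒮
  have hYclosed : IsClosed Y := (hχ.isThetaClosed_of_forall hθ).isClosed
  suffices hYuniv : Y = Set.univ by rwa [hYuniv, mk_univ] at hY
  refine eq_univ_of_forall fun p => by_contra fun hp => ?_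
  choose! V hVℬ hpV using fun y (hy : y ∈ Y) =>
    hbase y {p}ᶜ (isOpen_compl_singleton.mem_nhds (ne_of_mem_of_not_mem hy hp))
  obtain ⟨t, htc, htY, hcover⟩ := hYclosed.isLindelof.elim_nhds_subcover V fun y hy =>
    (hopen y _ (hVℬ y hy)).1.mem_nhds (hopen y _ (hVℬ y hy)).2
  have hmem : (⋃ y ∈ t, V y)ᶜ ∈ 𝒮 t := by
    refine ⟨V '' t, ?_, congrArg compl (sUnion_image V t)⟩
    rintro _ ⟨y, hy, rfl⟩
    exact mem_biUnion hy (hVℬ y (htY y hy))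
  have hpmem : p ∈ (⋃ y ∈ t, V y)ᶜ := by
    simp only [mem_compl_iff, mem_iUnion, not_exists]
    exact fun y hy hpy => hpV y (htY y hy) hpy rfl
  obtain ⟨y, hyV, hyY⟩ :=
    hmeet t htY ((le_aleph0_iff_set_countable.2 htc).trans hκ) _ hmem ⟨p, hpmem⟩
  exact hyV (hcover hyY)

theorem HasCharacterLE.subtype (hχ : HasCharacterLE X κ) (L : Set X) : HasCharacterLE L κ := by
  intro x
  obtain ⟨ℬ, hℬ, hopen, hbase⟩ := hχ x
  refine ⟨preimage Subtype.val '' ℬ, mk_image_le.trans hℬ, ?_, fun V hV => ?_⟩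
  · rintro _ ⟨U, hU, rfl⟩
    exact ⟨(hopen U hU).1.preimage continuous_subtype_val, (hopen U hU).2⟩
  · obtain ⟨W, hW, hWV⟩ := mem_nhds_subtype L x V |>.1 hV
    obtain ⟨U, hU, hUW⟩ := hbase W hW
    exact ⟨_, mem_image_of_mem _ hU, (preimage_mono hUW).trans hWV⟩

theorem HasCharacterLE.mk_le_two_power_of_isLindelof [T25Space X] (hχ : HasCharacterLE X κ)
    (hκ : ℵ₀ ≤ κ) {L : Set X} (hL : IsLindelof L) : #L ≤ 2 ^ κ :=
  have := isLindelof_iff_lindelofSpace.1 hL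
  (hχ.subtype L).mk_le_two_power hκ

end Lindelof

section FreeSequences

variable {X : Type u} [TopologicalSpace X] {κ μ : Cardinal.{u}}
  {Λ : Type u} [LinearOrder Λ] {f : Λ → X}

theorem IsFreeSeq.notMem_closure_image_Iio (hf : IsFreeSeq f) {i j : Λ} (h : i ≤ j) :
    f j ∉ closure (f '' Iio i) := fun hj =>
  (hf i).subset ⟨hj, subset_closure (mem_image_of_mem f h)⟩

theorem IsFreeSeq.notMem_closure_image_Ici (hf : IsFreeSeq f) {i j : Λ} (h : i < j) :
    f i ∉ closure (f '' Ici j) := fun hi =>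
  (hf j).subset ⟨subset_closure (mem_image_of_mem f h), hi⟩

theorem IsFreeSeq.notMem_closure_image_Ioi [WellFoundedLT Λ] (hf : IsFreeSeq f) (i : Λ) :
    f i ∉ closure (f '' Ioi i) := by
  rcases (Ioi i).eq_empty_or_nonempty with hi | hi
  · simp [hi]
  · have hsub : Ioi i ⊆ Ici (wellFounded_lt.min (Ioi i) hi) := fun k hk =>
      wellFounded_lt.min_le hk
    exact fun h => hf.notMem_closure_image_Ici (wellFounded_lt.min_mem (Ioi i) hi)
      (closure_mono (image_mono hsub) h)

theorem IsFreeSeq.isDiscreteSubset_range [WellFoundedLT Λ] (hf : IsFreeSeq f) :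
    IsDiscreteSubset (range f) := by
  rintro _ ⟨i, rfl⟩
  refine ⟨(closure (f '' Iio i))ᶜ ∩ (closure (f '' Ioi i))ᶜ,
    isClosed_closure.isOpen_compl.inter isClosed_closure.isOpen_compl, Subset.antisymm ?_ ?_⟩
  · rintro _ ⟨⟨hlt, hgt⟩, j, rfl⟩
    rcases lt_trichotomy j i with hji | rfl | hij
    · exact (hlt (subset_closure (mem_image_of_mem f hji))).elim
    · rfl
    · exact (hgt (subset_closure (mem_image_of_mem f hij))).elim
  · rintro _ rfl
    exact ⟨⟨hf.notMem_closure_image_Iio le_rfl, hf.notMem_closure_image_Ioi i⟩, mem_range_self i⟩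

theorem IsFreeSeq.exists_notMem_closure_image_Ici (hf : IsFreeSeq f) (hχ : HasCharacterLE X κ)
    (hκ : κ < Order.cof Λ) (y : X) : ∃ i, y ∉ closure (f '' Ici i) := by
  by_contra! hy
  obtain ⟨ℬ, hℬ, hopen, hbase⟩ := hχ y
  obtain ⟨i₀, -⟩ := not_isCofinal_iff.1 fun h : IsCofinal (∅ : Set Λ) =>
    ((Order.cof_le h).trans_eq (mk_eq_zero _)).not_gt (hκ.trans_le' zero_le)
  have hmeet : ∀ U : ℬ, ∃ j, f j ∈ (U : Set X) := fun U => by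
    obtain ⟨_, hU, j, -, rfl⟩ := mem_closure_iff.1 (hy i₀) U (hopen U U.2).1 (hopen U U.2).2
    exact ⟨j, hU⟩
  choose j hj using hmeet
  obtain ⟨i, hi⟩ := not_isCofinal_iff.1 fun h : IsCofinal (range j) =>
    ((Order.cof_le h).trans (mk_range_le.trans hℬ)).not_gt hκ
  have hyi : y ∈ closure (f '' Iio i) := mem_closure_iff_nhds.2 fun V hV => by
    obtain ⟨U, hU, hUV⟩ := hbase V hV
    exact ⟨_, hUV (hj ⟨U, hU⟩), mem_image_of_mem f (hi _ (mem_range_self _))⟩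
  exact (hf i).subset ⟨hyi, hy i⟩

theorem IsFreeSeq.cof_le (hf : IsFreeSeq f) (hχ : HasCharacterLE X κ) (hκ : ℵ₀ ≤ κ) {L : Set X}
    (hL : IsLindelof L) (hfL : range f ⊆ L) : Order.cof Λ ≤ κ := by
  by_contra! hcof
  choose i hi using hf.exists_notMem_closure_image_Ici hχ hcof
  obtain ⟨t, htc, hcover⟩ := hL.elim_countable_subcover (fun y => (closure (f '' Ici (i y)))ᶜ)
    (fun y => isClosed_closure.isOpen_compl) (fun y _ => mem_iUnion.2 ⟨y, hi y⟩)
  obtain ⟨j, hj⟩ := not_isCofinal_iff.1 fun h : IsCofinal (i '' t) =>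
    ((Order.cof_le h).trans ((le_aleph0_iff_set_countable.2 (htc.image i)).trans hκ)).not_gt hcof
  obtain ⟨y, hy, hjy⟩ := mem_iUnion₂.1 (hcover (hfL (mem_range_self j)))
  exact hjy (subset_closure (mem_image_of_mem f (hj _ (mem_image_of_mem i hy)).le))

theorem exists_isFreeSeq [WellFoundedLT Λ] (hΛ : ∀ a : Λ, #(Iic a) ≤ κ) {Y : Set X}
    {C : Set X → Set X}
    (hC : ∀ A ⊆ Y, #A ≤ κ → IsClosed (C A) ∧ Disjoint (closure A) (C A))
    (hY : ∀ E ⊆ Y, #E ≤ κ → ∀ 𝒜 ⊆ 𝒫 E, #𝒜 ≤ κ → ((⋂ A ∈ 𝒜, C A) ∩ Y).Nonempty) :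
    ∃ f : Λ → X, IsFreeSeq f := by
  have : Nonempty X := (hY ∅ (empty_subset Y) (by simp) ∅ (empty_subset _) (by simp)).to_type
  let candidates (a : Λ) (g : ∀ b < a, X) : Set X :=
    (⋂ i : Iic a, C (range fun b : Iio i.1 => g b (b.2.trans_le i.2))) ∩ Y
  let f : Λ → X := WellFoundedLT.fix fun a g => Classical.epsilon (· ∈ candidates a g)
  have hfix : ∀ a, f a = Classical.epsilon (· ∈ candidates a fun b _ => f b) :=
    WellFoundedLT.fix_eq _
  have hcand : ∀ a, candidates a (fun b _ => f b) =
      (⋂ A ∈ (fun i => f '' Iio i) '' Iic a, C A) ∩ Y := fun a => by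
    simp only [candidates, image_eq_range, biInter_range, iInter_coe_set]
  have hmem : ∀ a, f a ∈ (⋂ A ∈ (fun i => f '' Iio i) '' Iic a, C A) ∩ Y := by
    intro a
    induction a using WellFoundedLT.induction with
    | _ a ih =>
      have hsmall : #(f '' Iio a) ≤ κ :=
        mk_image_le.trans ((mk_le_mk_of_subset Iio_subset_Iic_self).trans (hΛ a))
      have hne := hY (f '' Iio a) (image_subset_iff.2 fun b hb => (ih b hb).2) hsmall
        ((fun i => f '' Iio i) '' Iic a)
        (image_subset_iff.2 fun i hi => image_mono (Iio_subset_Iio hi)) (mk_image_le.trans (hΛ a))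
      rw [hfix a, hcand a]
      exact Classical.epsilon_spec hne
  refine ⟨f, fun i => ?_⟩
  obtain ⟨hclosed, hdisj⟩ := hC (f '' Iio i) (image_subset_iff.2 fun b _ => (hmem b).2)
    (mk_image_le.trans ((mk_le_mk_of_subset Iio_subset_Iic_self).trans (hΛ i)))
  have htail : closure (f '' Ici i) ⊆ C (f '' Iio i) :=
    closure_minimal (image_subset_iff.2 fun a ha =>
      mem_iInter₂.1 (hmem a).1 _ (mem_image_of_mem _ ha)) hclosed
  exact (hdisj.mono_right htail).inter_eq

/-- `𝒞` consists of at most `μ` closed sets disjoint from the closure of `A`, and covers all but at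
most `μ` points of the space. Such families are what the closing-off argument needs in order to
continue a free sequence beyond `A`. -/
structure IsSeparatingFamily (μ : Cardinal.{u}) (A : Set X) (𝒞 : Set (Set X)) : Prop where
  mk_le : #𝒞 ≤ μ
  isClosed : ∀ C ∈ 𝒞, IsClosed C
  disjoint : ∀ C ∈ 𝒞, Disjoint (closure A) C
  mk_compl_sUnion_le : #↥(⋃₀ 𝒞)ᶜ ≤ μ

theorem exists_isFreeSeq_of_lt_mk [WellFoundedLT Λ] (hΛ : ∀ a : Λ, #(Iic a) ≤ κ) (hμ : ℵ₀ ≤ μ)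
    (hμκ : μ ^ κ ≤ μ) (hX : μ < #X)
    (hsep : ∀ A : Set X, #A ≤ κ → ∃ 𝒞, IsSeparatingFamily μ A 𝒞) :
    ∃ f : Λ → X, IsFreeSeq f := by
  choose! 𝒞 h𝒞 using hsep
  let pieces (E : Set X) : Set (Set X) := ⋃ A ∈ {A | A ⊆ E ∧ #A ≤ κ}, 𝒞 A
  have hpieces : ∀ E : Set X, #E ≤ κ → #(pieces E) ≤ μ := fun E hE =>
    mk_biUnion_le_of_le hμ
      (mk_bounded_powerset_le hμ hμκ (hE.trans (le_of_power_le_self hμ hμκ)))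
      fun A hA => (h𝒞 A hA.2).mk_le
  obtain ⟨Y, hY, hcompl, hmeet⟩ := exists_closed_under_and_meeting hμ hμκ
    (Φ := fun E => (⋃₀ 𝒞 E)ᶜ) (𝒮 := fun E => sInter '' {𝒟 | 𝒟 ⊆ pieces E ∧ #𝒟 ≤ κ})
    (fun E hE => (h𝒞 E hE).mk_compl_sUnion_le)
    (fun E hE => mk_image_le.trans (mk_bounded_powerset_le hμ hμκ (hpieces E hE)))
  obtain ⟨p, hp⟩ : ∃ p, p ∉ Y := by
    by_contra! hYuniv
    rw [eq_univ_of_forall hYuniv, mk_univ] at hY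
    exact hY.not_gt hX
  have hpiece : ∀ A ⊆ Y, #A ≤ κ → ∃ C ∈ 𝒞 A, p ∈ C := fun A hAY hA =>
    not_notMem.1 fun h => hp (hcompl A hAY hA h)
  choose! C hC hpC using hpiece
  refine exists_isFreeSeq hΛ (Y := Y) (C := C)
    (fun A hAY hA => ⟨(h𝒞 A hA).isClosed _ (hC A hAY hA), (h𝒞 A hA).disjoint _ (hC A hAY hA)⟩) ?_
  intro E hEY hE 𝒜 h𝒜E h𝒜
  have hsmall : ∀ A ∈ 𝒜, #A ≤ κ := fun A hA => (mk_le_mk_of_subset (h𝒜E hA)).trans hE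
  have hAY : ∀ A ∈ 𝒜, A ⊆ Y := fun A hA => (h𝒜E hA).trans hEY
  rw [← sInter_image]
  refine hmeet E hEY hE _ ⟨C '' 𝒜, ⟨?_, mk_image_le.trans h𝒜⟩, rfl⟩ ⟨p, ?_⟩
  · rintro _ ⟨A, hA, rfl⟩
    exact mem_biUnion ⟨h𝒜E hA, hsmall A hA⟩ (hC A (hAY A hA) (hsmall A hA))
  · rintro _ ⟨A, hA, rfl⟩
    exact hpC A (hAY A hA) (hsmall A hA)

end FreeSequences

section DiscreteSets

variable {X : Type u}

theorem exists_set_forall_mem_iff [Preorder X] [WellFoundedLT X] (Q : Set X → X → Prop) :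
    ∃ D : Set X, ∀ a, a ∈ D ↔ Q (D ∩ Iio a) a := by
  let P : X → Prop := WellFoundedLT.fix fun a ih => Q {b | ∃ h : b < a, ih b h} a
  refine ⟨{a | P a}, fun a => ?_⟩
  have hP : P a = Q {b | ∃ _ : b < a, P b} a := WellFoundedLT.fix_eq _ a
  have hset : {b | ∃ _ : b < a, P b} = {a | P a} ∩ Iio a := by
    ext b
    simp only [exists_prop, mem_ofPred_eq, mem_inter_iff, mem_Iio, and_comm]
  rw [mem_ofPred_eq, hP, hset]

variable [TopologicalSpace X] {κ μ : Cardinal.{u}}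

theorem exists_isDiscreteSubset_subset_closure_union {Z : Set X} {U : X → Set X}
    (hU : ∀ z ∈ Z, IsOpen (U z) ∧ z ∈ U z) :
    ∃ D ⊆ Z, IsDiscreteSubset D ∧ Z ⊆ closure D ∪ ⋃ d ∈ D, U d := by
  obtain ⟨_, _⟩ := exists_wellFoundedLT X
  let covered (E : Set X) : Set X := closure E ∪ ⋃ d ∈ E, U d
  obtain ⟨D, hD⟩ := exists_set_forall_mem_iff fun E a => a ∈ Z ∧ a ∉ covered E
  refine ⟨D, fun a ha => ((hD a).1 ha).1, fun a ha => ?_, fun z hz => ?_⟩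
  · obtain ⟨haZ, ha'⟩ := (hD a).1 ha
    refine ⟨U a ∩ (closure (D ∩ Iio a))ᶜ, (hU a haZ).1.inter isClosed_closure.isOpen_compl,
      Subset.antisymm ?_ ?_⟩
    · rintro b ⟨⟨hbU, hbcl⟩, hb⟩
      rcases lt_trichotomy b a with hba | rfl | hab
      · exact (hbcl (subset_closure ⟨hb, hba⟩)).elim
      · rfl
      · exact (((hD b).1 hb).2 (.inr (mem_biUnion (show a ∈ D ∩ Iio b from ⟨ha, hab⟩) hbU))).elim
    · rintro _ rfl
      exact ⟨⟨(hU _ haZ).2, fun h => ha' (.inl h)⟩, ha⟩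
  · by_contra hzD
    have hsub : covered (D ∩ Iio z) ⊆ covered D :=
      union_subset_union (closure_mono inter_subset_left)
        (biUnion_mono inter_subset_left fun _ _ => Subset.rfl)
    exact hzD (.inl (subset_closure ((hD z).2 ⟨hz, fun h => hzD (hsub h)⟩)))

theorem HasCharacterLE.exists_isSeparatingFamily [T25Space X] (hχ : HasCharacterLE X κ)
    (hμ : ℵ₀ ≤ μ) (hμκ : μ ^ κ ≤ μ) (hdiscrete : ∀ D : Set X, IsDiscreteSubset D → #D ≤ μ)
    {A : Set X} (hA : #A ≤ μ) : ∃ 𝒞, IsSeparatingFamily μ A 𝒞 := by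
  choose! U hUopen hU hUdisj using fun x (hx : x ∈ (thetaClosure A)ᶜ) =>
    isThetaClosed_thetaClosure.exists_disjoint_closure hx
  obtain ⟨D, hDA, hD, hcover⟩ :=
    exists_isDiscreteSubset_subset_closure_union fun z hz => ⟨hUopen z hz, hU z hz⟩
  have hrest : (⋃₀ ((fun d => closure (U d)) '' D))ᶜ ⊆ thetaClosure A ∪ thetaClosure D := by
    intro x hx
    by_contra! hxAD
    obtain ⟨hxA, hxD⟩ := not_or.1 hxAD
    rcases hcover hxA with hxcl | hxU
    · exact hxD (closure_subset_thetaClosure hxcl)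
    · obtain ⟨d, hd, hxd⟩ := mem_iUnion₂.1 hxU
      exact hx ⟨_, mem_image_of_mem _ hd, subset_closure hxd⟩
  refine ⟨(fun d => closure (U d)) '' D, mk_image_le.trans (hdiscrete D hD), ?_, ?_, ?_⟩
  · rintro _ ⟨d, -, rfl⟩
    exact isClosed_closure
  · rintro _ ⟨d, hd, rfl⟩
    exact (hUdisj d (hDA hd)).symm.mono_left closure_subset_thetaClosure
  · exact (mk_le_mk_of_subset hrest).trans (mk_union_le_of_le hμ
      (hχ.mk_thetaClosure_le hμ hμκ hA) (hχ.mk_thetaClosure_le hμ hμκ (hdiscrete D hD)))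

end DiscreteSets

section SuccessorOrder

variable {κ : Cardinal.{u}}

theorem mk_Iic_toType_ord_succ_le (hκ : ℵ₀ ≤ κ) (a : (Order.succ κ).ord.ToType) :
    #(Iic a) ≤ κ := by
  have hIio : #(Iio a) ≤ κ := Order.lt_succ_iff.1 (by simpa using mk_Iio_lt a)
  rw [← Iio_insert]
  exact mk_insert_le.trans (add_le_of_le hκ hIio (one_le_aleph0.trans hκ))

theorem cof_toType_ord_succ (hκ : ℵ₀ ≤ κ) :
    Order.cof (Order.succ κ).ord.ToType = Order.succ κ := by
  rw [Ordinal.cof_toType, (isRegular_succ hκ).cof_ord]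

end SuccessorOrder

/-- a Urysohn almost discretely Lindelöf space of character at most
`κ` has cardinality at most `2^κ` (in particular, first-countable such spaces have
cardinality at most the continuum). -/
theorem stmt5 {X : Type u} [TopologicalSpace X] [T25Space X]
    (hADL : AlmostDiscretelyLindelof X) (κ : Cardinal.{u}) (hκ : ℵ₀ ≤ κ)
    (hχ : HasCharacterLE X κ) : #X ≤ 2 ^ κ := by
  have hμ : ℵ₀ ≤ (2 : Cardinal.{u}) ^ κ := hκ.trans (cantor κ).le
  have hμκ := (two_power_power_self hκ).le
  have hdiscrete : ∀ D : Set X, IsDiscreteSubset D → #D ≤ 2 ^ κ := fun D hD => by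
    obtain ⟨L, hL, hDL⟩ := hADL D hD
    exact (mk_le_mk_of_subset hDL).trans (hχ.mk_le_two_power_of_isLindelof hκ hL)
  by_contra! hX
  obtain ⟨f, hf⟩ := exists_isFreeSeq_of_lt_mk (mk_Iic_toType_ord_succ_le hκ) hμ hμκ hX
    fun A hA => hχ.exists_isSeparatingFamily hμ hμκ hdiscrete (hA.trans (cantor κ).le)
  obtain ⟨L, hL, hfL⟩ := hADL (range f) hf.isDiscreteSubset_range
  have hcof := hf.cof_le hχ hκ hL hfL
  rw [cof_toType_ord_succ hκ] at hcof
  exact (Order.lt_succ κ).not_ge hcof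
end

section
/- Assume 2^{<𝔠} = 𝔠. Let X be an almost discretely Lindelöf Hausdorff space with countable tightness and countable closed pseudocharacter (ψ_c(X) = ω). Then |X| ≤ 𝔠. -/
open Cardinal Set Topology

universe u

/-!
For `κ = 𝔠` the assumption on cardinals becomes `κ ^< κ ≤ κ`. Countable tightness and countable
closed pseudocharacter give `|closure S| ≤ |S| ^ ℵ₀`, so closing off in `κ` steps yields a closed
set `Y` of size at most `κ` with this property: whenever `S ⊆ Y` has size less than `κ` and `V`
chooses one of the given neighbourhoods of each point, `closure S ∪ ⋃ s ∈ S, V s` contains `Y` only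
if it is the whole space.

If some `p` were outside `Y`, choose `V` so that no `V s` with `s ∈ Y` contains `p`. Then the sets
`closure S ∪ ⋃ s ∈ S, V s` miss `p`, so they never contain `Y`, and one can keep choosing points of
`Y` outside the sets belonging to the earlier choices. The chosen points form a discrete `D ⊆ Y`
that is not covered by fewer than `κ` of the `V y` with `y ∈ Y`. But `D` lies in a Lindelöf `L`,
and countably many of these `V y` cover `L ∩ Y ⊇ D`.
-/

/-- Countable tightness, `t(X) = ω`: a point in the closure of a set is in the closure of a
countable part of it. -/
def CountablyTight (X : Type u) [TopologicalSpace X] : Prop :=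
  ∀ (A : Set X) (x : X), x ∈ closure A → ∃ B ⊆ A, B.Countable ∧ x ∈ closure B

/-- Countable closed pseudocharacter, `ψ_c(X) = ω`: every point is the only common point of the
closures of countably many of its open neighbourhoods. The family is indexed by `ℕ`, with
repetitions allowed. -/
def CountableClosedPseudocharacter (X : Type u) [TopologicalSpace X] : Prop :=
  ∀ x : X, ∃ U : ℕ → Set X, (∀ n, IsOpen (U n) ∧ x ∈ U n) ∧ (⋂ n, closure (U n)) = {x}

section Cardinal

variable {κ : Cardinal.{u}} {α : Type u}

theorem continuum_powerlt_self_le (h : ∀ μ : Cardinal.{u}, μ < 𝔠 → 2 ^ μ ≤ 𝔠) :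
    (𝔠 : Cardinal.{u}) ^< 𝔠 ≤ 𝔠 := by
  refine powerlt_le.2 fun μ hμ => ?_
  calc (𝔠 : Cardinal.{u}) ^ μ = 2 ^ (ℵ₀ * μ) := by rw [power_mul, two_power_aleph0]
    _ ≤ 𝔠 := h _ (mul_lt_of_lt aleph0_le_continuum aleph0_lt_continuum hμ)

theorem isRegular_of_powerlt_self_le (hκ : ℵ₀ ≤ κ) (hpow : κ ^< κ ≤ κ) : κ.IsRegular := by
  refine ⟨hκ, not_lt.1 fun hcof => ?_⟩
  exact (lt_power_cof_ord hκ).not_ge (powerlt_le.1 hpow _ hcof)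

theorem mk_Iio_ord_toType_lt (i : κ.ord.ToType) : #(Iio i) < κ := by
  simpa using mk_Iio_lt i (by simp)

theorem exists_forall_lt_of_mk_lt (hκ : κ.IsRegular) {s : Set κ.ord.ToType}
    (hs : #s < κ) : ∃ j, ∀ i ∈ s, i < j := by
  refine not_isCofinal_iff.1 fun hcof => (Order.cof_le hcof).not_gt ?_
  rwa [Ordinal.cof_toType, hκ.cof_ord]

theorem mk_iUnion_le_of_le {ι : Type u} (hκ : ℵ₀ ≤ κ) {f : ι → Set α} (hι : #ι ≤ κ)
    (hf : ∀ i, #(f i) ≤ κ) : #(⋃ i, f i) ≤ κ :=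
  calc #(⋃ i, f i) ≤ #ι * ⨆ i, #(f i) := mk_iUnion_le f
    _ ≤ κ * κ := mul_le_mul' hι (ciSup_le' hf)
    _ = κ := mul_eq_self hκ

theorem mk_setOf_subset_mk_lt_le (hκ : ℵ₀ ≤ κ) (hpow : κ ^< κ ≤ κ) {W : Set α} (hW : #W ≤ κ) :
    #{S : Set α | S ⊆ W ∧ #S < κ} ≤ κ := by
  have hsub : {S : Set α | S ⊆ W ∧ #S < κ} ⊆
      ⋃ i : κ.ord.ToType, {S : Set α | S ⊆ W ∧ #S ≤ #(Iio i)} := by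
    rintro S ⟨hSW, hS⟩
    obtain ⟨i, hi⟩ := Ordinal.typein_surj (α := κ.ord.ToType) (· < ·)
      (by simpa using hS : (#S).ord < _)
    have hi : #(Iio i) = #S := (congrArg Ordinal.card hi).trans (card_ord _)
    exact mem_iUnion.2 ⟨i, hSW, hi.ge⟩
  refine (mk_le_mk_of_subset hsub).trans
    (mk_iUnion_le_of_le hκ (mk_ord_toType κ).le fun i => ?_)
  calc #{S : Set α | S ⊆ W ∧ #S ≤ #(Iio i)} ≤ max (#W) ℵ₀ ^ #(Iio i) := mk_bounded_subset_le W _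
    _ ≤ κ ^ #(Iio i) := power_le_power_right (max_le hW hκ)
    _ ≤ κ := powerlt_le.1 hpow _ (mk_Iio_ord_toType_lt i)

theorem exists_mk_le_forall_subset (hκ : ℵ₀ ≤ κ) (hpow : κ ^< κ ≤ κ) (G : Set α → Set α)
    (hG : ∀ S : Set α, #S < κ → #(G S) ≤ κ) :
    ∃ Y : Set α, #Y ≤ κ ∧ ∀ S ⊆ Y, #S < κ → G S ⊆ Y := by
  let stage : κ.ord.ToType → Set α := WellFoundedLT.fix fun i prev =>
    ⋃ S : {S : Set α | S ⊆ (⋃ j : Iio i, prev j j.2) ∧ #S < κ}, G S.1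
  have stage_eq (i) : stage i =
      ⋃ S : {S : Set α | S ⊆ (⋃ j : Iio i, stage j) ∧ #S < κ}, G S.1 :=
    WellFoundedLT.fix_eq _ i
  have mk_stage_le (i) : #(stage i) ≤ κ := by
    induction i using WellFoundedLT.induction with
    | ind i ih =>
      rw [stage_eq]
      refine mk_iUnion_le_of_le hκ (mk_setOf_subset_mk_lt_le hκ hpow ?_) fun S => hG S.1 S.2.2
      exact mk_iUnion_le_of_le hκ (mk_Iio_ord_toType_lt i).le fun j => ih j j.2
  refine ⟨⋃ i, stage i, mk_iUnion_le_of_le hκ (mk_ord_toType κ).le mk_stage_le,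
    fun S hS hSκ => ?_⟩
  choose g hg using fun s : S => mem_iUnion.1 (hS s.2)
  obtain ⟨j, hj⟩ := exists_forall_lt_of_mk_lt (isRegular_of_powerlt_self_le hκ hpow)
    (mk_range_le.trans_lt hSκ : #(range g) < κ)
  have hSj : S ⊆ ⋃ i : Iio j, stage i := fun s hs =>
    mem_iUnion.2 ⟨⟨g ⟨s, hs⟩, hj _ (mem_range_self _)⟩, hg ⟨s, hs⟩⟩
  calc G S ⊆ stage j := by
        rw [stage_eq]
        exact subset_iUnion_of_subset ⟨S, hSj, hSκ⟩ Subset.rfl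
    _ ⊆ ⋃ i, stage i := subset_iUnion stage j

/-- Feeding in the earlier values of `y` as well lets `x` escape every small subset of `range y`. -/
theorem exists_transfinite_seq_of_forall_small {Y : Set α} {P : Set α → α → Prop} {ι : Type u}
    [LinearOrder ι] [WellFoundedLT ι] (hκ : ℵ₀ ≤ κ) (hι : ∀ i : ι, #(Iio i) < κ)
    (hP : ∀ S ⊆ Y, #S < κ → ∃ z ∈ Y, P S z) {y : ι → α} (hy : ∀ i, y i ∈ Y) :
    ∃ x : ι → α, ∀ i, x i ∈ Y ∧ P (x '' Iio i ∪ y '' Iio i) (x i) := by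
  obtain ⟨z₀, -, -⟩ := hP ∅ (empty_subset Y) (by simpa using aleph0_pos.trans_le hκ)
  have : Nonempty α := ⟨z₀⟩
  choose! next next_mem next_spec using hP
  let x : ι → α := WellFoundedLT.fix fun i prev =>
    next (range (fun j : Iio i => prev j j.2) ∪ y '' Iio i)
  have x_eq (i) : x i = next (x '' Iio i ∪ y '' Iio i) := by
    rw [image_eq_range x]
    exact WellFoundedLT.fix_eq _ i
  have mk_lt (i) : #↑(x '' Iio i ∪ y '' Iio i) < κ :=
    (mk_union_le _ _).trans_lt <|
      add_lt_of_lt hκ (mk_image_le.trans_lt (hι i)) (mk_image_le.trans_lt (hι i))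
  have subset_Y (i) (hx : ∀ j < i, x j ∈ Y) : x '' Iio i ∪ y '' Iio i ⊆ Y :=
    union_subset (image_subset_iff.2 hx) (image_subset_iff.2 fun j _ => hy j)
  have x_mem (i) : x i ∈ Y := by
    induction i using WellFoundedLT.induction with
    | ind i ih =>
      rw [x_eq]
      exact next_mem _ (subset_Y i ih) (mk_lt i)
  refine ⟨x, fun i => ⟨x_mem i, ?_⟩⟩
  exact x_eq i ▸ next_spec _ (subset_Y i fun j _ => x_mem j) (mk_lt i)

end Cardinal

section Topology

variable {X : Type u} [TopologicalSpace X] {κ : Cardinal.{u}}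

theorem CountablyTight.exists_seq (ht : CountablyTight X) {S : Set X} {x : X}
    (hx : x ∈ closure S) : ∃ f : ℕ → S, x ∈ closure (range fun m => (f m : X)) := by
  obtain ⟨B, hBS, hB, hxB⟩ := ht S x hx
  obtain ⟨b, rfl⟩ := hB.exists_eq_range (closure_nonempty_iff.1 ⟨x, hxB⟩)
  exact ⟨fun m => ⟨b m, hBS (mem_range_self m)⟩, hxB⟩

theorem CountablyTight.exists_iInter_closure_range_eq (ht : CountablyTight X)
    (hψ : CountableClosedPseudocharacter X) {S : Set X} {x : X} (hx : x ∈ closure S) :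
    ∃ f : ℕ → ℕ → S, (⋂ n, closure (range fun m => (f n m : X))) = {x} := by
  obtain ⟨U, hU, hUx⟩ := hψ x
  have hxU (n) : x ∈ closure (U n ∩ S) :=
    (hU n).1.inter_closure ⟨(hU n).2, hx⟩
  choose f hf using fun n => ht.exists_seq (hxU n)
  refine ⟨fun n m => ⟨f n m, (f n m).2.2⟩, Subset.antisymm ?_ ?_⟩
  · rw [← hUx]
    exact iInter_mono fun n => closure_mono (range_subset_iff.2 fun m => (f n m).2.1)
  · exact singleton_subset_iff.2 (mem_iInter.2 hf)

theorem CountablyTight.mk_closure_le (ht : CountablyTight X)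
    (hψ : CountableClosedPseudocharacter X) (S : Set X) : #(closure S) ≤ #S ^ ℵ₀ := by
  choose f hf using fun x : closure S => ht.exists_iInter_closure_range_eq hψ x.2
  have f_injective : Function.Injective f := fun a b hab =>
    Subtype.ext (singleton_injective (by rw [← hf a, ← hf b, hab]))
  calc #(closure S) ≤ #(ℕ → ℕ → S) := mk_le_of_injective f_injective
    _ = #S ^ ℵ₀ := by simp [← power_mul]

theorem CountablyTight.isClosed_of_forall_countable (ht : CountablyTight X) {Y : Set X}
    (hY : ∀ S ⊆ Y, S.Countable → closure S ⊆ Y) : IsClosed Y := by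
  refine isClosed_of_closure_subset fun x hx => ?_
  obtain ⟨B, hBY, hB, hxB⟩ := ht Y x hx
  exact hY B hBY hB hxB

theorem exists_isClosed_forall_cover_eq_univ (hκ : ℵ₀ < κ) (hpow : κ ^< κ ≤ κ)
    (ht : CountablyTight X) (hψ : CountableClosedPseudocharacter X) (U : X → ℕ → Set X) :
    ∃ Y : Set X, IsClosed Y ∧ #Y ≤ κ ∧ ∀ S ⊆ Y, #S < κ → ∀ n : X → ℕ,
      Y ⊆ closure S ∪ ⋃ s ∈ S, U s (n s) → closure S ∪ ⋃ s ∈ S, U s (n s) = Set.univ := by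
  let cover (S : Set X) (n : S → ℕ) : Set X := closure S ∪ ⋃ s : S, U s (n s)
  choose pick hpick using fun A : {A : Set X // A ≠ Set.univ} => (ne_univ_iff_exists_notMem _).1 A.2
  let G (S : Set X) : Set X :=
    closure S ∪ range fun n : {n : S → ℕ // cover S n ≠ Set.univ} => pick ⟨cover S n, n.2⟩
  have mk_G_le (S : Set X) (hS : #S < κ) : #(G S) ≤ κ := by
    have h_closure : #(closure S) ≤ κ := calc
      #(closure S) ≤ #S ^ ℵ₀ := ht.mk_closure_le hψ S
      _ ≤ κ ^ ℵ₀ := power_le_power_right hS.le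
      _ ≤ κ := powerlt_le.1 hpow _ hκ
    have h_choices : #(S → ℕ) ≤ κ := calc
      #(S → ℕ) = ℵ₀ ^ #S := by simp
      _ ≤ κ ^ #S := power_le_power_right hκ.le
      _ ≤ κ := powerlt_le.1 hpow _ hS
    refine (mk_union_le _ _).trans (add_le_of_le hκ.le h_closure ?_)
    exact mk_range_le.trans ((mk_subtype_le _).trans h_choices)
  obtain ⟨Y, hYκ, hY⟩ := exists_mk_le_forall_subset hκ.le hpow G mk_G_le
  refine ⟨Y, ht.isClosed_of_forall_countable fun S hSY hS => ?_, hYκ,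
    fun S hSY hS n hsub => ?_⟩
  · exact subset_union_left.trans (hY S hSY (hS.le_aleph0.trans_lt hκ))
  · rw [biUnion_eq_iUnion] at hsub ⊢
    by_contra hne
    exact hpick ⟨_, hne⟩ (hsub (hY S hSY hS (.inr ⟨⟨fun s => n s, hne⟩, rfl⟩)))

theorem isDiscreteSubset_range {ι : Type*} [LinearOrder ι] {x : ι → X} {V : ι → Set X}
    (hV : ∀ i, IsOpen (V i) ∧ x i ∈ V i) (hcl : ∀ i, x i ∉ closure (x '' Iio i))
    (hxV : ∀ i j, j < i → x i ∉ V j) : IsDiscreteSubset (range x) := by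
  rintro _ ⟨i, rfl⟩
  refine ⟨V i ∩ (closure (x '' Iio i))ᶜ,
    (hV _).1.inter isClosed_closure.isOpen_compl, Subset.antisymm ?_ ?_⟩
  · rintro _ ⟨⟨hjV, hj_cl⟩, j, rfl⟩
    rcases lt_trichotomy j i with hji | rfl | hij
    · exact (hj_cl (subset_closure (mem_image_of_mem x hji))).elim
    · rfl
    · exact (hxV j i hij hjV).elim
  · exact singleton_subset_iff.2 ⟨⟨(hV _).2, hcl i⟩, mem_range_self i⟩

theorem exists_isDiscreteSubset_not_subset_biUnion (hκ : κ.IsRegular) {Y : Set X} (hYκ : #Y ≤ κ)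
    {V : X → Set X} (hV : ∀ z, IsOpen (V z) ∧ z ∈ V z)
    (hY : ∀ S ⊆ Y, #S < κ → ¬ Y ⊆ closure S ∪ ⋃ s ∈ S, V s) :
    ∃ D ⊆ Y, IsDiscreteSubset D ∧ ∀ C ⊆ Y, #C < κ → ¬ D ⊆ ⋃ c ∈ C, V c := by
  have hYne : Y.Nonempty := by
    by_contra! hY_empty
    exact hY ∅ (empty_subset Y) (by simpa using hκ.pos) (hY_empty.trans_subset (empty_subset _))
  obtain ⟨y, rfl⟩ : ∃ y : κ.ord.ToType → X, range y = Y := by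
    rw [← mk_ord_toType κ] at hYκ
    obtain ⟨e⟩ := hYκ
    have := hYne.to_subtype
    exact ⟨Subtype.val ∘ Function.invFun e, by
      rw [(Function.invFun_surjective e.injective).range_comp, Subtype.range_coe]⟩
  obtain ⟨x, hx⟩ := exists_transfinite_seq_of_forall_small hκ.aleph0_le mk_Iio_ord_toType_lt
    (fun S hSY hS => not_subset.1 (hY S hSY hS)) mem_range_self
  simp only [mem_union, not_or] at hx
  choose hxY hcl hnV using hx
  have hxV (i) (z) (hz : z ∈ x '' Iio i ∪ y '' Iio i) : x i ∉ V z := fun hxi =>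
    hnV i (mem_biUnion hz hxi)
  refine ⟨range x, range_subset_iff.2 hxY, isDiscreteSubset_range (fun i => hV (x i))
    (fun i hi => hcl i (closure_mono subset_union_left hi))
    fun i j hji => hxV i _ (.inl (mem_image_of_mem x hji)), fun C hCY hC hDC => ?_⟩
  choose g hg using fun c : C => hCY c.2
  obtain ⟨j, hj⟩ := exists_forall_lt_of_mk_lt hκ (mk_range_le.trans_lt hC : #(range g) < κ)
  obtain ⟨c, hc, hxc⟩ := mem_iUnion₂.1 (hDC (mem_range_self j))
  exact hxV j c (.inr ⟨g ⟨c, hc⟩, hj _ (mem_range_self _), hg _⟩) hxc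

theorem stmt7_general (hκ : ℵ₀ < κ) (hpow : κ ^< κ ≤ κ) (hADL : AlmostDiscretelyLindelof X)
    (ht : CountablyTight X) (hψ : CountableClosedPseudocharacter X) : #X ≤ κ := by
  choose U hU hUx using fun x => hψ x
  obtain ⟨Y, hYclosed, hYκ, hY⟩ := exists_isClosed_forall_cover_eq_univ hκ hpow ht hψ U
  suffices hYuniv : Y = Set.univ by rwa [hYuniv, mk_univ] at hYκ
  by_contra hYuniv
  obtain ⟨p, hp⟩ := (ne_univ_iff_exists_notMem Y).1 hYuniv
  have hsep : ∀ x ∈ Y, ∃ n, p ∉ U x n := by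
    intro x hx
    by_contra! hpU
    have hpx : p ∈ ⋂ n, closure (U x n) := mem_iInter.2 fun n => subset_closure (hpU n)
    rw [hUx] at hpx
    exact hp (hpx ▸ hx)
  choose! n hn using hsep
  have hV (z) : IsOpen (U z (n z)) ∧ z ∈ U z (n z) := hU z (n z)
  obtain ⟨D, hDY, hD, hDV⟩ := exists_isDiscreteSubset_not_subset_biUnion
    (isRegular_of_powerlt_self_le hκ.le hpow) hYκ hV fun S hSY hS => by
      intro hYS
      rcases (hY S hSY hS n hYS).ge (mem_univ p) with hpS | hpS
      · exact hp (closure_minimal hSY hYclosed hpS)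
      · obtain ⟨s, hs, hps⟩ := mem_iUnion₂.1 hpS
        exact hn s (hSY hs) hps
  obtain ⟨L, hL, hDL⟩ := hADL D hD
  obtain ⟨C, hC, hCY, hLC⟩ := (hL.inter_right hYclosed).elim_nhds_subcover
    (fun z => U z (n z)) fun z _ => (hV z).1.mem_nhds (hV z).2
  exact hDV C (fun c hc => (hCY c hc).2) (hC.le_aleph0.trans_lt hκ)
    ((subset_inter hDL hDY).trans hLC)

end Topology

/-- (2^{<𝔠} = 𝔠) an almost discretely Lindelöf Hausdorff space with
countable tightness and countable closed pseudocharacter has cardinality at most `𝔠`. -/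
theorem stmt7 {X : Type u} [TopologicalSpace X] [T2Space X]
    (hch : ∀ κ : Cardinal.{u}, κ < Cardinal.continuum → 2 ^ κ ≤ Cardinal.continuum)
    (hADL : AlmostDiscretelyLindelof X)
    (ht : ∀ (A : Set X) (x : X), x ∈ closure A →
      ∃ B ⊆ A, B.Countable ∧ x ∈ closure B)
    (hψc : ∀ x : X, ∃ U : ℕ → Set X, (∀ n, IsOpen (U n) ∧ x ∈ U n) ∧
      (⋂ n, closure (U n)) = {x}) :
    #X ≤ Cardinal.continuum :=
  stmt7_general aleph0_lt_continuum (continuum_powerlt_self_le hch) hADL ht hψc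
end
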